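/- Canonical valuation from a saturated set (Corollary 1): if Δ is an A-saturated set in H_K, then the valuation v = (v1,v2) defined by v1(B) = 1 iff B ∈ Δ and v2(B) = 1 iff ⊖B ∈ Δ belongs to F_K, and for every formula B, B ∈ Δ iff B is designated under v (i.e. v1(B)=1). -/

import Mathlib

/-- Formulas of the modal language: propositional variables, negation,
the modality ⊖ (here `box`), and implication. -/
inductive Form : Type
  | var : ℕ → Form
  | neg : Form → Form
  | box : Form → Form
  | imp : Form → Form → Form

/-- A valuation `v = (v1, v2)` over the 4-valued Nmatrix for the minimal modal
logic M: `v1` behaves classically on ¬ and →, and `v1(⊖A) = v2(A)`;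
`v2` is otherwise unconstrained. -/
structure Val where
  v1 : Form → Fin 2
  v2 : Form → Fin 2
  neg_eq : ∀ A, v1 (Form.neg A) = 1 - v1 A
  imp_eq : ∀ A B, v1 (Form.imp A B) = max (1 - v1 A) (v1 B)
  box_eq : ∀ A, v1 (Form.box A) = v2 A

/-- The Hilbert calculus H_K: H plus axiom schema (K). -/
inductive HK : Set Form → Form → Prop
  | hyp {Γ A} : A ∈ Γ → HK Γ A
  | ax1 {Γ} (A B : Form) : HK Γ (A.imp (B.imp A))
  | ax2 {Γ} (A B C : Form) :
      HK Γ ((A.imp (B.imp C)).imp ((A.imp B).imp (A.imp C)))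
  | ax3 {Γ} (A B : Form) : HK Γ ((B.neg.imp A.neg).imp (A.imp B))
  | axK {Γ} (A B : Form) :
      HK Γ ((Form.box (A.imp B)).imp ((Form.box A).imp (Form.box B)))
  | mp {Γ A B} : HK Γ (A.imp B) → HK Γ A → HK Γ B

/-- The restriction defining F_K: valuations satisfying the (K) condition. -/
def FK (v : Val) : Prop :=
  ∀ A B : Form, v.v2 (A.imp B) ≤ max (1 - v.v2 A) (v.v2 B)

/-- Δ is A-saturated (in H_K): Δ ⊬ A but Δ ∪ {B} ⊢ A for every B ∉ Δ. -/
def Saturated (Δ : Set Form) (A : Form) : Prop :=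
  ¬ HK Δ A ∧ ∀ B : Form, B ∉ Δ → HK (insert B Δ) A

theorem HK.wk {Γ Δ : Set Form} {A : Form} (h : HK Γ A) (hs : Γ ⊆ Δ) : HK Δ A := by
  induction h with
  | hyp h => exact .hyp (hs h)
  | ax1 A B => exact .ax1 A B
  | ax2 A B C => exact .ax2 A B C
  | ax3 A B => exact .ax3 A B
  | axK A B => exact .axK A B
  | mp _ _ i j => exact .mp i j

theorem HK.ded {Γ Γ' : Set Form} {A B : Form} (h : HK Γ' B) (e : Γ' = insert A Γ) :
    HK Γ (A.imp B) := by
  induction h with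
  | hyp h =>
    subst e
    rcases h with rfl | h
    · exact .mp (.mp (.ax2 _ (Form.imp _ _) _) (.ax1 _ _)) (.ax1 _ (.var 0))
    · exact .mp (.ax1 _ _) (.hyp h)
  | ax1 A B => exact .mp (.ax1 _ _) (.ax1 A B)
  | ax2 A B C => exact .mp (.ax1 _ _) (.ax2 A B C)
  | ax3 A B => exact .mp (.ax1 _ _) (.ax3 A B)
  | axK A B => exact .mp (.ax1 _ _) (.axK A B)
  | mp _ _ i j => exact .mp (.mp (.ax2 _ _ _) i) j

theorem HK.exf {Γ : Set Form} {A B : Form} (h : HK Γ A.neg) : HK Γ (A.imp B) :=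
  .mp (.ax3 _ _) (.mp (.ax1 _ _) h)

theorem HK.clav {Γ : Set Form} {A : Form} (h : HK Γ (A.neg.imp A)) : HK Γ A := by
  have h1 : HK Γ (A.neg.imp (A.neg.imp A).neg) := by
    refine HK.ded ?_ rfl
    have ha : HK (insert A.neg Γ) A.neg := .hyp (Set.mem_insert _ _)
    exact .mp ha.exf (.mp (h.wk (Set.subset_insert _ _)) ha)
  exact .mp (.mp (.ax3 _ _) h1) h

theorem HK.dne {Γ : Set Form} {A : Form} (h : HK Γ A.neg.neg) : HK Γ A :=
  HK.clav h.exf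

theorem HK.cases {Γ : Set Form} {A B : Form} (h1 : HK Γ (B.imp A)) (h2 : HK Γ (B.neg.imp A)) :
    HK Γ A := by
  refine HK.clav (HK.ded ?_ rfl)
  have h1 := h1.wk (Set.subset_insert A.neg Γ)
  have h2 := h2.wk (Set.subset_insert A.neg Γ)
  have ha : HK (insert A.neg Γ) A.neg := .hyp (Set.mem_insert _ _)
  refine .mp h2 (HK.clav (HK.ded ?_ rfl))
  have hs := Set.subset_insert B.neg.neg (insert A.neg Γ)
  exact .mp (ha.wk hs).exf (.mp (h1.wk hs) (HK.dne (.hyp (Set.mem_insert _ _))))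

/-- Canonical valuation from an A-saturated set (Corollary 1): the valuation
determined by membership in Δ (and by membership of ⊖B for the second
component) lies in F_K and designates exactly the members of Δ. -/
theorem canonical_valuation (Δ : Set Form) (A : Form) (hΔ : Saturated Δ A) :
    ∃ v : Val,
      (∀ B : Form, v.v1 B = 1 ↔ B ∈ Δ) ∧
      (∀ B : Form, v.v2 B = 1 ↔ Form.box B ∈ Δ) ∧
      FK v ∧
      (∀ B : Form, B ∈ Δ ↔ v.v1 B = 1) := by
  classical
  obtain ⟨hA, hS⟩ := hΔ
  have cl : ∀ B, HK Δ B → B ∈ Δ := fun B hB => by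
    by_contra hn
    exact hA (.mp (HK.ded (hS B hn) rfl) hB)
  have hneg : ∀ B, Form.neg B ∈ Δ ↔ B ∉ Δ := fun B => by
    constructor
    · intro h h'
      exact hA (.mp (HK.exf (.hyp h)) (.hyp h'))
    · intro h
      by_contra h'
      exact hA (HK.cases (HK.ded (hS _ h) rfl) (HK.ded (hS _ h') rfl))
  have himp : ∀ B C, Form.imp B C ∈ Δ ↔ (B ∉ Δ ∨ C ∈ Δ) := fun B C => by
    constructor
    · intro h
      by_cases hB : B ∈ Δ
      · exact .inr (cl _ (.mp (.hyp h) (.hyp hB)))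
      · exact .inl hB
    · rintro (h | h)
      · exact cl _ (HK.exf (.hyp ((hneg B).2 h)))
      · exact cl _ (.mp (.ax1 _ _) (.hyp h))
  refine ⟨⟨fun B => if B ∈ Δ then 1 else 0, fun B => if Form.box B ∈ Δ then 1 else 0,
    ?_, ?_, ?_⟩, ?_, ?_, ?_, ?_⟩
  · intro B
    by_cases h : B ∈ Δ <;> simp [hneg, h]
  · intro B C
    by_cases h : B ∈ Δ <;> by_cases h' : C ∈ Δ <;> simp [himp, h, h']
  · intro B
    rfl
  · intro B
    simp
  · intro B
    simp
  · intro B C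
    have hk : Form.box (B.imp C) ∈ Δ → Form.box B ∈ Δ → Form.box C ∈ Δ := fun h h' =>
      cl _ (.mp (.mp (.axK _ _) (.hyp h)) (.hyp h'))
    by_cases h : Form.box (B.imp C) ∈ Δ <;> by_cases h1 : Form.box B ∈ Δ <;>
      by_cases h2 : Form.box C ∈ Δ <;> simp [h, h1, h2] <;> exact h2 (hk h h1)
  · intro B
    simp
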